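/- arXiv:2005.04334 — 4 statements merged into one kernel-verified Lean document; each statement's English description precedes it below -/
import Mathlib

section
/- Let A be a commutative ring, m a natural number, and M an m×m matrix over A. In the formal power series ring A[[t]], one has det(1 − t·M) · (Σ_{k≥1} tr(M^k)·t^k) = −t · D(det(1 − t·M)), where D denotes the formal derivative of power series. In other words, the generating series of traces of iterates of M is the negative logarithmic derivative of the reverse characteristic polynomial det(1 − t·M). -/
/-!
The identity is Jacobi's formula in its logarithmic form, `D (det N) = det N * tr (N⁻¹ * D N)`, for
`N = 1 - t • M` over `A⟦t⟧`: here `D N = -M`, and `N⁻¹` is the geometric series `∑ M ^ k t ^ k`, so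
`-t * tr (N⁻¹ * D N)` is the series `∑_{k ≥ 1} tr (M ^ k) t ^ k`.
-/

open Matrix
open scoped PowerSeries

section Jacobi

lemma derivation_prod {R B E ι : Type*} [CommSemiring R] [CommSemiring B] [Algebra R B]
    [AddCommMonoid E] [Module R E] [Module B E] [DecidableEq ι]
    (D : Derivation R B E) (s : Finset ι) (f : ι → B) :
    D (∏ i ∈ s, f i) = ∑ i ∈ s, (∏ j ∈ s.erase i, f j) • D (f i) := by
  induction s using Finset.induction_on with
  | empty => simp
  | insert a s ha ih =>
    have herase (i : ι) (hi : i ∈ s) :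
        ∏ j ∈ (insert a s).erase i, f j = f a * ∏ j ∈ s.erase i, f j := by
      rw [Finset.erase_insert_of_ne (ne_of_mem_of_not_mem hi ha).symm,
        Finset.prod_insert (mt Finset.mem_of_mem_erase ha)]
    calc D (∏ i ∈ insert a s, f i)
        = f a • ∑ i ∈ s, (∏ j ∈ s.erase i, f j) • D (f i) + (∏ i ∈ s, f i) • D (f a) := by
          rw [Finset.prod_insert ha, D.leibniz, ih]
      _ = (∏ i ∈ s, f i) • D (f a) +
            ∑ i ∈ s, (∏ j ∈ (insert a s).erase i, f j) • D (f i) := by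
          rw [add_comm, Finset.smul_sum]
          congr 1
          exact Finset.sum_congr rfl fun i hi => by rw [herase i hi, smul_smul]
      _ = ∑ i ∈ insert a s, (∏ j ∈ (insert a s).erase i, f j) • D (f i) := by
          rw [Finset.sum_insert ha, Finset.erase_insert ha]

variable {R B n : Type*} [CommSemiring R] [CommRing B] [Algebra R B] [Fintype n] [DecidableEq n]

lemma derivation_det_eq_sum_det_updateCol (D : Derivation R B B) (N : Matrix n n B) :
    D N.det = ∑ i, (N.updateCol i ((N.map D).col i)).det := by
  have hprod (σ : Equiv.Perm n) (i : n) :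
      ∏ j, N.updateCol i ((N.map D).col i) (σ j) j =
        (∏ j ∈ Finset.univ.erase i, N (σ j) j) • D (N (σ i) i) := by
    rw [← Finset.prod_erase_mul _ _ (Finset.mem_univ i), updateCol_self, smul_eq_mul]
    congr 1
    exact Finset.prod_congr rfl fun j hj => updateCol_ne (Finset.ne_of_mem_erase hj)
  simp only [det_apply, hprod, map_sum, Units.smul_def, map_zsmul, derivation_prod,
    Finset.smul_sum]
  exact Finset.sum_comm

lemma trace_adjugate_mul_eq_sum_det_updateCol (N P : Matrix n n B) :
    trace (N.adjugate * P) = ∑ i, (N.updateCol i (P.col i)).det :=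
  Finset.sum_congr rfl fun i _ => by
    rw [← cramer_apply, cramer_eq_adjugate_mulVec]
    rfl

lemma derivation_det_eq_trace_adjugate_mul (D : Derivation R B B) (N : Matrix n n B) :
    D N.det = trace (N.adjugate * N.map D) := by
  rw [derivation_det_eq_sum_det_updateCol, trace_adjugate_mul_eq_sum_det_updateCol]

lemma derivation_det_eq_det_mul_trace_inv_mul (D : Derivation R B B) {N : Matrix n n B}
    (hN : IsUnit N.det) : D N.det = N.det * trace (N⁻¹ * N.map D) := by
  have hadj : N.adjugate = N.det • N⁻¹ := by
    rw [inv_def, smul_smul, Ring.mul_inverse_cancel _ hN, one_smul]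
  rw [derivation_det_eq_trace_adjugate_mul, hadj, smul_mul_assoc, trace_smul, smul_eq_mul]

end Jacobi

/-- The geometric series `∑ M ^ k t ^ k`. It is encoded as a matrix of power series, rather than
as a power series with matrix coefficients, so that determinants and traces over `A⟦X⟧` apply. -/
noncomputable def geomSeries {A n : Type*} [Semiring A] [Fintype n] [DecidableEq n]
    (M : Matrix n n A) : Matrix n n A⟦X⟧ :=
  Matrix.of fun i j => PowerSeries.mk fun k => (M ^ k) i j

section Semiring

variable {A n : Type*} [Semiring A] [Fintype n] [DecidableEq n] (M : Matrix n n A)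

lemma coeff_geomSeries_apply (k : ℕ) (i j : n) :
    PowerSeries.coeff k (geomSeries M i j) = (M ^ k) i j := by
  rw [geomSeries, of_apply, PowerSeries.coeff_mk]

lemma coeff_map_C_mul_geomSeries_apply (k : ℕ) (i j : n) :
    PowerSeries.coeff k ((M.map PowerSeries.C * geomSeries M) i j) = (M ^ (k + 1)) i j := by
  simp only [mul_apply, map_apply, map_sum, PowerSeries.coeff_C_mul, coeff_geomSeries_apply,
    pow_succ']

lemma geomSeries_eq_one_add_X_smul :
    geomSeries M = 1 + (PowerSeries.X : A⟦X⟧) • (M.map PowerSeries.C * geomSeries M) := by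
  ext i j k
  rw [Matrix.add_apply, Matrix.smul_apply, smul_eq_mul, map_add, coeff_geomSeries_apply]
  cases k with
  | zero => by_cases hij : i = j <;> simp [Matrix.one_apply, hij]
  | succ k =>
    rw [PowerSeries.coeff_succ_X_mul, coeff_map_C_mul_geomSeries_apply]
    by_cases hij : i = j <;> simp [Matrix.one_apply, hij, PowerSeries.coeff_one]

lemma X_mul_trace_map_C_mul_geomSeries :
    PowerSeries.X * trace (M.map PowerSeries.C * geomSeries M) =
      PowerSeries.mk fun k => if k = 0 then 0 else trace (M ^ k) := by
  ext k
  cases k with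
  | zero => simp
  | succ k =>
    simp [PowerSeries.coeff_succ_X_mul, trace, coeff_map_C_mul_geomSeries_apply]

end Semiring

lemma one_sub_X_smul_mul_geomSeries {A n : Type*} [Ring A] [Fintype n] [DecidableEq n]
    (M : Matrix n n A) :
    (1 - (PowerSeries.X : A⟦X⟧) • M.map PowerSeries.C) * geomSeries M = 1 := by
  rw [sub_mul, one_mul, smul_mul_assoc, sub_eq_iff_eq_add]
  exact geomSeries_eq_one_add_X_smul M

section CommRing

variable {A n : Type*} [CommRing A] [DecidableEq n] (M : Matrix n n A)

lemma map_derivative_one_sub_X_smul :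
    (1 - (PowerSeries.X : A⟦X⟧) • M.map PowerSeries.C).map (PowerSeries.derivative A) =
      -M.map PowerSeries.C := by
  ext i j : 1
  by_cases hij : i = j <;> simp [hij]

variable [Fintype n]

lemma coe_charpolyRev :
    (M.charpolyRev : A⟦X⟧) = (1 - (PowerSeries.X : A⟦X⟧) • M.map PowerSeries.C).det := by
  rw [charpolyRev, ← Polynomial.coeToPowerSeries.ringHom_apply, RingHom.map_det]
  congr 1
  ext i j : 1
  by_cases hij : i = j <;> simp [hij, PowerSeries.X_mul]

lemma derivative_coe_charpolyRev :
    PowerSeries.derivative A (M.charpolyRev : A⟦X⟧) =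
      -(M.charpolyRev * trace (M.map PowerSeries.C * geomSeries M)) := by
  have hmul := one_sub_X_smul_mul_geomSeries M
  rw [coe_charpolyRev,
    derivation_det_eq_det_mul_trace_inv_mul _ (isUnit_det_of_right_inverse hmul),
    inv_eq_right_inv hmul, map_derivative_one_sub_X_smul, mul_neg, trace_neg, mul_neg,
    trace_mul_comm]

theorem trace_series_eq_neg_log_deriv_charRev_general :
    (M.charpolyRev : A⟦X⟧) * PowerSeries.mk (fun k => if k = 0 then 0 else trace (M ^ k)) =
      -(PowerSeries.X * PowerSeries.derivative A (M.charpolyRev : A⟦X⟧)) := by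
  rw [derivative_coe_charpolyRev, ← X_mul_trace_map_C_mul_geomSeries]
  ring

end CommRing

/-- For a commutative ring `A` and an `m × m` matrix `M` over `A`, the generating series
of traces of iterates of `M` is the negative logarithmic derivative of the reverse
characteristic polynomial `det (1 - t • M)`:
`det(1 − t·M) · (Σ_{k≥1} tr(M^k)·t^k) = −t · D(det(1 − t·M))` in `A⟦t⟧`. -/
theorem trace_series_eq_neg_log_deriv_charRev
    (A : Type*) [CommRing A] (m : ℕ) (M : Matrix (Fin m) (Fin m) A) :
    ((Matrix.det (1 - (Polynomial.X : Polynomial A) • M.map Polynomial.C) :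
        Polynomial A) : PowerSeries A) *
      PowerSeries.mk (fun k => if k = 0 then 0 else Matrix.trace (M ^ k)) =
    -(PowerSeries.X *
        PowerSeries.derivative A
          ((Matrix.det (1 - (Polynomial.X : Polynomial A) • M.map Polynomial.C) :
              Polynomial A) : PowerSeries A)) :=
  trace_series_eq_neg_log_deriv_charRev_general M
end

section
/- There exists a bijection T from the set of sequences of integers indexed by the positive natural numbers to itself such that for every sequence b : ℕ+ → ℤ and every positive integer n, Σ_{d ∣ n} d·(T b)(d)^{n/d} = Σ_{d ∣ n} d·b(d), where both sums range over the positive divisors d of n. (That is, the additive ghost coordinates of b agree with the Witt ghost coordinates of T b for all n.) -/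
/-!
If `p ∣ x ^ p - x` for all primes `p`, the sequence `n ↦ x ^ n` satisfies the Gauss congruences, so
`n` divides `∑_{d ∣ n} μ(d) x ^ (n / d)` and there are necklace numbers `M x e` with
`∑_{e ∣ n} e * M x e = x ^ n`. Substituting this into the Witt ghost coordinates and collecting the
terms with `d * e = k` gives
`∑_{d ∣ n} d * a(d) ^ (n / d) = ∑_{k ∣ n} k * (∑_{d ∣ k} M (a d) (k / d))`,
so the sequence `k ↦ ∑_{d ∣ k} M (a d) (k / d)` has the Witt ghost coordinates of `a` as its
additive ghost coordinates. As `M x 1 = x`, this sequence is `a` plus a correction whose `k`-th term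
involves only the `a d` with `d < k`. Hence it determines `a` and can be prescribed arbitrarily, and
`T` is the inverse of the resulting bijection.
-/

/-- Extend a sequence indexed by the positive naturals to all naturals, by zero at `0`. -/
def extZ (a : ℕ+ → ℤ) : ℕ → ℤ := fun d => if h : 0 < d then a ⟨d, h⟩ else 0

open ArithmeticFunction Function

section Divisors

variable {M : Type*} [AddCommMonoid M]

theorem sum_divisors_mul_of_coprime {m n : ℕ} (hmn : m.Coprime n) (f : ℕ → M) :
    ∑ d ∈ (m * n).divisors, f d = ∑ d ∈ m.divisors, ∑ e ∈ n.divisors, f (d * e) := by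
  rw [Nat.divisors_mul, Finset.mul_def, Finset.sum_image hmn.mul_injOn_divisors,
    Finset.sum_product]

theorem sum_divisors_sum_divisors_div (n : ℕ) (f : ℕ → ℕ → M) :
    ∑ d ∈ n.divisors, ∑ e ∈ (n / d).divisors, f d e =
      ∑ k ∈ n.divisors, ∑ d ∈ k.divisors, f d (k / d) := by
  rw [Finset.sum_sigma', Finset.sum_sigma']
  refine Finset.sum_bij' (fun x _ ↦ ⟨x.1 * x.2, x.1⟩) (fun x _ ↦ ⟨x.2, x.1 / x.2⟩) ?_ ?_ ?_ ?_ ?_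
  all_goals
    rintro ⟨d, e⟩ h
    simp only [Finset.mem_sigma, Nat.mem_divisors] at h
    obtain ⟨⟨hd, hn⟩, he, -⟩ := h
  · have hde : d * e ∣ n := Nat.mul_dvd_of_dvd_div hd he
    simp only [Finset.mem_sigma, Nat.mem_divisors]
    exact ⟨⟨hde, hn⟩, dvd_mul_right d e, ne_zero_of_dvd_ne_zero hn hde⟩
  · have hen : e ∣ n := he.trans hd
    simp only [Finset.mem_sigma, Nat.mem_divisors]
    exact ⟨⟨hen, hn⟩, Nat.div_dvd_div he hd, Nat.div_ne_zero_iff_of_dvd hen |>.2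
      ⟨hn, ne_zero_of_dvd_ne_zero hn hen⟩⟩
  · simp only [Nat.mul_div_cancel_left e (Nat.pos_of_dvd_of_pos hd hn.pos)]
  · simp only [Nat.mul_div_cancel' he]
  · simp only [Nat.mul_div_cancel_left e (Nat.pos_of_dvd_of_pos hd hn.pos)]

end Divisors

section Triangular

variable {ι : Type*} [Preorder ι] [WellFoundedLT ι] {G : ι → Type*} [∀ i, AddGroup (G i)]

theorem bijective_add_of_dependsOn_Iio {Φ : (∀ i, G i) → ∀ i, G i}
    (hΦ : ∀ i, DependsOn (Φ · i) (Set.Iio i)) : Bijective fun a ↦ a + Φ a := by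
  classical
  constructor
  · intro a a' h
    funext i
    induction i using WellFoundedLT.induction with
    | ind i ih =>
      have hi : a i + Φ a i = a' i + Φ a' i := congrFun h i
      rwa [show Φ a i = Φ a' i from hΦ i ih, add_left_inj] at hi
  · intro b
    let a : ∀ i, G i := WellFoundedLT.fix fun i prev ↦
      b i - Φ (fun j ↦ if h : j < i then prev j h else 0) i
    refine ⟨a, funext fun i ↦ ?_⟩
    have ha : a i = b i - Φ (fun j ↦ if j < i then a j else 0) i := WellFoundedLT.fix_eq _ i
    have htrunc : Φ a i = Φ (fun j ↦ if j < i then a j else 0) i :=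
      hΦ i fun j hj ↦ (if_pos hj).symm
    change a i + Φ a i = b i
    rw [htrunc, ha, sub_add_cancel]

end Triangular

section Moebius

variable {A : Type*} [AddCommGroup A]

/-- The Möbius transform `n ↦ ∑_{d ∣ n} μ(d) c(n / d)` of a sequence `c`, which inverts summation
over divisors. -/
def moebiusTransform (c : ℕ → A) (n : ℕ) : A :=
  ∑ d ∈ n.divisors, moebius d • c (n / d)

theorem sum_moebiusTransform (c : ℕ → A) {n : ℕ} (hn : 0 < n) :
    ∑ d ∈ n.divisors, moebiusTransform c d = c n :=
  sum_eq_iff_sum_smul_moebius_eq.2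
    (fun _ _ ↦ Nat.sum_divisorsAntidiagonal fun d e ↦ moebius d • c e) n hn

theorem moebiusTransform_prime_pow_mul {p r : ℕ} (hp : p.Prime) (hpr : p.Coprime r) (k : ℕ)
    (c : ℕ → A) :
    moebiusTransform c (p ^ (k + 1) * r) =
      moebiusTransform (fun d ↦ c (p ^ (k + 1) * d) - c (p ^ k * d)) r := by
  have hmoebius_zero (i d : ℕ) : moebius (p ^ (i + 2) * d) = 0 := by
    refine moebius_eq_zero_of_not_squarefree fun h ↦ hp.not_isUnit (h p ?_)
    exact Dvd.intro (p ^ i * d) (by ring)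
  simp only [moebiusTransform]
  rw [sum_divisors_mul_of_coprime (hpr.pow_left _), Finset.sum_comm]
  refine Finset.sum_congr rfl fun d hd ↦ ?_
  have hdr := Nat.dvd_of_mem_divisors hd
  have hmoebius_neg : moebius (p * d) = -moebius d := by
    rw [isMultiplicative_moebius.map_mul_of_coprime (hpr.coprime_dvd_right hdr),
      moebius_apply_prime hp, neg_one_mul]
  have hdiv : p ^ (k + 1) * r / (p * d) = p ^ k * (r / d) := by
    rw [pow_succ', mul_assoc, Nat.mul_div_mul_left _ _ hp.pos, Nat.mul_div_assoc _ hdr]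
  rw [Nat.sum_divisors_prime_pow hp, Finset.sum_range_succ', Finset.sum_range_succ',
    Finset.sum_eq_zero fun i _ ↦ by rw [hmoebius_zero, zero_smul]]
  simp only [zero_add, pow_zero, pow_one, one_mul, hmoebius_neg, hdiv, Nat.mul_div_assoc _ hdr]
  rw [neg_smul, smul_sub, neg_add_eq_sub]

end Moebius

section Gauss

variable {R : Type*} [CommRing R]

/-- The Gauss congruences for a sequence `c`: `c(p ^ (k + 1) r) ≡ c(p ^ k r)` modulo `p ^ (k + 1)`
for every prime `p`. -/
def GaussCongruence (c : ℕ → R) : Prop :=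
  ∀ p : ℕ, p.Prime → ∀ k r : ℕ, (p : R) ^ (k + 1) ∣ c (p ^ (k + 1) * r) - c (p ^ k * r)

theorem gaussCongruence_pow {x : R} (hx : ∀ p : ℕ, p.Prime → (p : R) ∣ x ^ p - x) :
    GaussCongruence fun n ↦ x ^ n := by
  intro p hp k r
  have hxr : (p : R) ∣ (x ^ p) ^ r - x ^ r := (hx p hp).trans (sub_dvd_pow_sub_pow _ _ r)
  convert dvd_sub_pow_of_dvd_sub hxr k using 2 <;> ring

theorem natCast_dvd_of_primeFactors {n : ℕ} (hn : n ≠ 0) {y : R}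
    (h : ∀ p ∈ n.primeFactors, (p : R) ^ n.factorization p ∣ y) : (n : R) ∣ y := by
  rw [← Nat.prod_factorization_pow_eq_self hn, Nat.prod_factorization_eq_prod_primeFactors,
    Nat.cast_prod]
  refine Finset.prod_dvd_of_coprime (fun p hp q hq hpq ↦ ?_) fun p hp ↦ ?_
  · exact (Nat.coprime_pow_primes _ _ (Nat.prime_of_mem_primeFactors hp)
      (Nat.prime_of_mem_primeFactors hq) hpq).cast
  · simpa only [Nat.cast_pow] using h p hp

theorem GaussCongruence.natCast_dvd_moebiusTransform {c : ℕ → R} (hc : GaussCongruence c) (n : ℕ) :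
    (n : R) ∣ moebiusTransform c n := by
  obtain rfl | hn := eq_or_ne n 0
  · simp [moebiusTransform]
  refine natCast_dvd_of_primeFactors hn fun p hp ↦ ?_
  have hp' := Nat.prime_of_mem_primeFactors hp
  obtain ⟨k, hk⟩ := Nat.exists_eq_add_one_of_ne_zero
    (hp'.factorization_pos_of_dvd hn (Nat.dvd_of_mem_primeFactors hp)).ne'
  rw [hk, ← Nat.ordProj_mul_ordCompl_eq_self n p, hk,
    moebiusTransform_prime_pow_mul hp' (hk ▸ Nat.coprime_ordCompl hp' hn)]
  refine Finset.dvd_sum fun d _ ↦ ?_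
  rw [zsmul_eq_mul]
  exact (hc p hp' k _).mul_left _

theorem GaussCongruence.exists_sum_divisors_mul_eq {c : ℕ → R} (hc : GaussCongruence c) :
    ∃ b : ℕ → R, ∀ n ≠ 0, ∑ d ∈ n.divisors, d * b d = c n := by
  choose b hb using hc.natCast_dvd_moebiusTransform
  refine ⟨b, fun n hn ↦ ?_⟩
  simp only [← hb, sum_moebiusTransform c hn.pos]

end Gauss

section Necklace

variable {R : Type*}

/-- The sequence `k ↦ ∑_{d ∣ k} M (a d) (k / d)`, which turns the Witt coordinates `a` into additive
coordinates when `M x n` is the number of primitive necklaces of length `n` in `x` colours. -/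
def necklaceSum [AddCommMonoid R] (M : R → ℕ → R) (a : ℕ → R) (k : ℕ) : R :=
  ∑ d ∈ k.divisors, M (a d) (k / d)

theorem sum_divisors_mul_necklaceSum [Semiring R] {M : R → ℕ → R}
    (hM : ∀ x, ∀ n ≠ 0, ∑ e ∈ n.divisors, e * M x e = x ^ n) (a : ℕ → R) (n : ℕ) :
    ∑ d ∈ n.divisors, d * a d ^ (n / d) = ∑ k ∈ n.divisors, k * necklaceSum M a k := by
  calc ∑ d ∈ n.divisors, d * a d ^ (n / d)
      = ∑ d ∈ n.divisors, ∑ e ∈ (n / d).divisors, (d * e : R) * M (a d) e := by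
        refine Finset.sum_congr rfl fun d hd ↦ ?_
        have hnd : n / d ≠ 0 := (Nat.div_pos (Nat.divisor_le hd) (Nat.pos_of_mem_divisors hd)).ne'
        simp only [← hM _ _ hnd, Finset.mul_sum, mul_assoc]
    _ = ∑ k ∈ n.divisors, ∑ d ∈ k.divisors, (d * (k / d : ℕ) : R) * M (a d) (k / d) :=
        sum_divisors_sum_divisors_div n fun d e ↦ (d * e : R) * M (a d) e
    _ = ∑ k ∈ n.divisors, k * necklaceSum M a k := by
        refine Finset.sum_congr rfl fun k _ ↦ ?_
        rw [necklaceSum, Finset.mul_sum]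
        refine Finset.sum_congr rfl fun d hd ↦ ?_
        rw [← Nat.cast_mul, Nat.mul_div_cancel' (Nat.dvd_of_mem_divisors hd)]

theorem bijective_necklaceSum [AddCommGroup R] {M : R → ℕ → R} (hM : ∀ x, M x 1 = x) :
    Bijective fun (a : ℕ+ → R) (n : ℕ+) ↦ necklaceSum M (extend PNat.val a 0) n := by
  let Φ (a : ℕ+ → R) (n : ℕ+) : R :=
    ∑ d ∈ (n : ℕ).properDivisors, M (extend PNat.val a 0 d) (n / d)
  have hΦ (n : ℕ+) : DependsOn (Φ · n) (Set.Iio n) := by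
    refine fun a a' h ↦ Finset.sum_congr rfl fun d hd ↦ ?_
    lift d to ℕ+ using Nat.pos_of_mem_properDivisors hd
    rw [PNat.coe_injective.extend_apply, PNat.coe_injective.extend_apply,
      h d (Nat.mem_properDivisors.1 hd).2]
  convert bijective_add_of_dependsOn_Iio hΦ using 3 with a n
  rw [necklaceSum, ← Nat.cons_self_properDivisors n.ne_zero, Finset.sum_cons, Nat.div_self n.pos,
    hM, PNat.coe_injective.extend_apply, Pi.add_apply]

end Necklace

theorem exists_bijection_additive_to_witt_ghost_general {R : Type*} [CommRing R]
    (hR : ∀ p : ℕ, p.Prime → ∀ x : R, (p : R) ∣ x ^ p - x) :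
    ∃ T : (ℕ+ → R) → (ℕ+ → R), Bijective T ∧
      ∀ (b : ℕ+ → R) (n : ℕ+),
        ∑ d ∈ (n : ℕ).divisors, (d : R) * extend PNat.val (T b) 0 d ^ ((n : ℕ) / d)
          = ∑ d ∈ (n : ℕ).divisors, (d : R) * extend PNat.val b 0 d := by
  choose M hM using fun x : R ↦
    (gaussCongruence_pow fun p hp ↦ hR p hp x).exists_sum_divisors_mul_eq
  have hM_one (x : R) : M x 1 = x := by simpa using hM x 1 one_ne_zero
  let S := Equiv.ofBijective _ (bijective_necklaceSum hM_one)
  refine ⟨S.symm, S.symm.bijective, fun b n ↦ ?_⟩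
  rw [sum_divisors_mul_necklaceSum hM]
  refine Finset.sum_congr rfl fun d hd ↦ ?_
  lift d to ℕ+ using Nat.pos_of_mem_divisors hd
  have hS : necklaceSum M (extend PNat.val (S.symm b) 0) d = b d :=
    congrFun (S.apply_symm_apply b) d
  rw [hS, PNat.coe_injective.extend_apply]

theorem extZ_eq_extend (a : ℕ+ → ℤ) : extZ a = extend PNat.val a 0 := by
  funext d
  obtain rfl | hd := d.eq_zero_or_pos
  · simp [extZ]
  · lift d to ℕ+ using hd
    rw [PNat.coe_injective.extend_apply]
    exact dif_pos d.pos

/-- There is a bijection `T` on integer sequences indexed by `ℕ+` such that for every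
sequence `b` and every positive integer `n`, the `n`-th Witt ghost coordinate of `T b`
equals the `n`-th additive ghost coordinate of `b`:
`Σ_{d ∣ n} d·(T b)(d)^(n/d) = Σ_{d ∣ n} d·b(d)`. -/
theorem exists_bijection_additive_to_witt_ghost :
    ∃ T : (ℕ+ → ℤ) → (ℕ+ → ℤ), Function.Bijective T ∧
      ∀ (b : ℕ+ → ℤ) (n : ℕ+),
        ∑ d ∈ (n : ℕ).divisors, (d : ℤ) * (extZ (T b) d) ^ ((n : ℕ) / d)
          = ∑ d ∈ (n : ℕ).divisors, (d : ℤ) * extZ b d := by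
  simp only [extZ_eq_extend]
  exact exists_bijection_additive_to_witt_ghost_general fun p hp x ↦
    Int.prime_dvd_pow_self_sub hp x
end

section
/- For every sequence b : ℕ+ → ℤ there exists a sequence a : ℕ+ → ℤ such that for every positive integer n, Σ_{d ∣ n} d·a(d)^{n/d} = Σ_{d ∣ n} d·b(d). (Integrality of the change of coordinates: the sequence a, which is determined recursively by this system of equations with a priori only rational entries, in fact has integer entries.) -/
section Divisibility

variable {R : Type*} [CommRing R]

lemma natCast_dvd_of_forall_prime_pow_dvd {n : ℕ} (hn : n ≠ 0) {x : R}
    (h : ∀ p k : ℕ, p.Prime → p ^ k ∣ n → (p : R) ^ k ∣ x) : (n : R) ∣ x := by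
  rw [← Nat.prod_factorization_pow_eq_self hn, Finsupp.prod, Nat.cast_prod]
  refine Finset.prod_dvd_of_coprime (fun p hp q hq hpq => ?_) fun p hp => ?_
  · exact (Nat.coprime_pow_primes _ _ (Nat.prime_of_mem_primeFactors hp)
      (Nat.prime_of_mem_primeFactors hq) hpq).cast
  · rw [Nat.cast_pow]
    exact h p _ (Nat.prime_of_mem_primeFactors hp) (Nat.ordProj_dvd n p)

lemma pow_succ_dvd_pow_sub_pow {p e m : ℕ} {x y : R} (hxy : (p : R) ∣ x - y) (hm : p ^ e ∣ m) :
    (p : R) ^ (e + 1) ∣ x ^ m - y ^ m := by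
  obtain ⟨c, rfl⟩ := hm
  rw [pow_mul, pow_mul]
  exact (dvd_sub_pow_of_dvd_sub hxy e).trans (sub_dvd_pow_sub_pow _ _ c)

lemma pow_dvd_mul_pow_sub_pow {p k d m : ℕ} (hp : p.Prime) {x y : R} (hxy : (p : R) ∣ x - y)
    (h : p ^ k ∣ d * (p * m)) : (p : R) ^ k ∣ d * (x ^ m - y ^ m) := by
  obtain ⟨c, hc⟩ := h
  obtain ⟨i, j, d', m', rfl, -, rfl, hm'⟩ :=
    mul_eq_mul_prime_pow hp.prime (hc.trans (mul_comm _ c))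
  have hi : (p : R) ^ i ∣ (d' * p ^ i : ℕ) := mod_cast Nat.cast_dvd_cast (dvd_mul_left (p ^ i) d')
  have hj : p ^ j ∣ p * m := hm' ▸ dvd_mul_left _ _
  rw [pow_add]
  refine mul_dvd_mul hi ?_
  cases j with
  | zero => simp only [pow_zero, one_dvd]
  | succ e =>
    rw [pow_succ', Nat.mul_dvd_mul_iff_left hp.pos] at hj
    exact pow_succ_dvd_pow_sub_pow hxy hj

lemma pow_dvd_of_dvd_mul_of_not_dvd {p k m d : ℕ} (hp : p.Prime) (hk : p ^ k ∣ p * m)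
    (hd : d ∣ p * m) (hdm : ¬d ∣ m) : p ^ k ∣ d := by
  obtain ⟨c, hc⟩ := hd
  have hpc : ¬p ∣ c := by
    rintro ⟨c', rfl⟩
    rw [mul_left_comm, Nat.mul_right_inj hp.ne_zero] at hc
    exact hdm ⟨c', hc⟩
  exact hp.prime.pow_dvd_of_dvd_mul_right k hpc (hc ▸ hk)

end Divisibility

section Ghost

variable {R : Type*} [CommRing R]

/-- The `n`-th Witt ghost coordinate of `a`, the value of the `n`-th big Witt polynomial. Only the
terms of `a` with positive index matter. -/
def wittGhost (a : ℕ → R) (n : ℕ) : R :=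
  ∑ d ∈ n.divisors, (d : R) * a d ^ (n / d)

/-- The `n`-th additive ghost coordinate of `b`, in which the powers of `wittGhost` are omitted.
Only the terms of `b` with positive index matter. -/
def additiveGhost (b : ℕ → R) (n : ℕ) : R :=
  ∑ d ∈ n.divisors, (d : R) * b d

/-- Dwork's congruences `w (p * m) ≡ w m` modulo `p ^ k` for every prime power `p ^ k ∣ p * m`.
They characterize Witt ghost sequences when `x ^ p ≡ x` modulo `p` in `R` for every prime `p`. -/
def DworkCongruences (w : ℕ → R) : Prop :=
  ∀ ⦃p k m : ℕ⦄, p.Prime → p ^ k ∣ p * m → (p : R) ^ k ∣ w (p * m) - w m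

lemma pow_dvd_sum_divisors_mul_sub {p k m : ℕ} (hp : p.Prime) (hk : p ^ k ∣ p * m) (f g : ℕ → R)
    (hfg : ∀ d ∈ m.divisors, (p : R) ^ k ∣ d * (f d - g d)) :
    (p : R) ^ k ∣ ∑ d ∈ (p * m).divisors, d * f d - ∑ d ∈ m.divisors, d * g d := by
  rcases eq_or_ne m 0 with rfl | hm
  · simp
  have hpm : p * m ≠ 0 := mul_ne_zero hp.ne_zero hm
  rw [← Finset.sum_sdiff (Nat.divisors_subset_of_dvd hpm (Nat.dvd_mul_left m p)), add_sub_assoc,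
    ← Finset.sum_sub_distrib]
  refine dvd_add (Finset.dvd_sum fun d hd => ?new) (Finset.dvd_sum fun d hd => ?old)
  case new =>
    obtain ⟨hd, hdm⟩ := Finset.mem_sdiff.1 hd
    have hpd : p ^ k ∣ d := pow_dvd_of_dvd_mul_of_not_dvd hp hk (Nat.dvd_of_mem_divisors hd)
      fun h => hdm (Nat.mem_divisors.2 ⟨h, hm⟩)
    exact Dvd.dvd.mul_right (mod_cast Nat.cast_dvd_cast hpd) _
  case old =>
    rw [← mul_sub]
    exact hfg d hd

lemma dworkCongruences_additiveGhost (b : ℕ → R) : DworkCongruences (additiveGhost b) :=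
  fun _ _ _ hp hk => pow_dvd_sum_divisors_mul_sub hp hk b b fun d _ => by
    rw [sub_self, mul_zero]
    exact dvd_zero _

lemma dworkCongruences_wittGhost (fermat : ∀ p : ℕ, p.Prime → ∀ x : R, (p : R) ∣ x ^ p - x)
    (a : ℕ → R) : DworkCongruences (wittGhost a) := by
  intro p k m hp hk
  refine pow_dvd_sum_divisors_mul_sub hp hk _ _ fun d hd => ?_
  have hdm : d ∣ m := Nat.dvd_of_mem_divisors hd
  rw [Nat.mul_div_assoc p hdm, pow_mul]
  refine pow_dvd_mul_pow_sub_pow hp (fermat p hp (a d)) ?_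
  rwa [mul_left_comm, Nat.mul_div_cancel' hdm]

lemma wittGhost_eq_sum_properDivisors_add (a : ℕ → R) {n : ℕ} (hn : n ≠ 0) :
    wittGhost a n = ∑ d ∈ n.properDivisors, (d : R) * a d ^ (n / d) + n * a n := by
  rw [wittGhost, ← Nat.cons_self_properDivisors hn, Finset.sum_cons,
    Nat.div_self (Nat.pos_of_ne_zero hn), pow_one, add_comm]

lemma DworkCongruences.natCast_dvd_sub_sum_properDivisors
    (fermat : ∀ p : ℕ, p.Prime → ∀ x : R, (p : R) ∣ x ^ p - x) {w : ℕ → R}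
    (hw : DworkCongruences w) {a : ℕ → R} {n : ℕ} (hn : n ≠ 0)
    (ha : ∀ m < n, m ≠ 0 → wittGhost a m = w m) :
    (n : R) ∣ w n - ∑ d ∈ n.properDivisors, (d : R) * a d ^ (n / d) := by
  refine natCast_dvd_of_forall_prime_pow_dvd hn fun p k hp hk => ?_
  rcases Nat.eq_zero_or_pos k with rfl | hk0
  · simp only [pow_zero, one_dvd]
  obtain ⟨m, rfl⟩ : p ∣ n := (dvd_pow_self p hk0.ne').trans hk
  have hm : m ≠ 0 := right_ne_zero_of_mul hn
  have hmn : m < p * m := lt_mul_of_one_lt_left (Nat.pos_of_ne_zero hm) hp.one_lt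
  have hghost : (p : R) ^ k ∣ w (p * m) - wittGhost a (p * m) := by
    simpa only [ha m hmn hm, sub_sub_sub_cancel_right] using
      dvd_sub (hw hp hk) (dworkCongruences_wittGhost fermat a hp hk)
  have hlast : (p : R) ^ k ∣ (p * m : ℕ) * a (p * m) :=
    Dvd.dvd.mul_right (mod_cast Nat.cast_dvd_cast hk) _
  simpa only [wittGhost_eq_sum_properDivisors_add a hn, ← sub_sub, sub_add_cancel] using
    dvd_add hghost hlast

/-- The sequence with Witt ghost coordinates `w`, obtained by solving the `n`-th ghost equation for
its `n`-th term. If `R` has torsion the solution need not be unique, hence the choice; it is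
arbitrary where the equation has no solution. -/
noncomputable def wittOfGhost (w : ℕ → R) (n : ℕ) : R :=
  Classical.epsilon fun x : R =>
    w n - ∑ d ∈ n.properDivisors.attach, (d.1 : R) * wittOfGhost w d.1 ^ (n / d.1) = n * x
termination_by n
decreasing_by exact (Nat.mem_properDivisors.1 d.2).2

lemma natCast_mul_wittOfGhost {w : ℕ → R} {n : ℕ}
    (h : (n : R) ∣ w n - ∑ d ∈ n.properDivisors, (d : R) * wittOfGhost w d ^ (n / d)) :
    n * wittOfGhost w n =
      w n - ∑ d ∈ n.properDivisors, (d : R) * wittOfGhost w d ^ (n / d) := by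
  rw [← Finset.sum_attach] at h ⊢
  rw [wittOfGhost]
  exact (Classical.epsilon_spec h).symm

theorem DworkCongruences.wittGhost_wittOfGhost
    (fermat : ∀ p : ℕ, p.Prime → ∀ x : R, (p : R) ∣ x ^ p - x) {w : ℕ → R}
    (hw : DworkCongruences w) {n : ℕ} (hn : n ≠ 0) : wittGhost (wittOfGhost w) n = w n := by
  induction n using Nat.strong_induction_on with
  | _ n ih =>
    rw [wittGhost_eq_sum_properDivisors_add _ hn,
      natCast_mul_wittOfGhost (hw.natCast_dvd_sub_sum_properDivisors fermat hn ih),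
      add_sub_cancel]

theorem exists_witt_seq_matching_additive_ghost_general
    (fermat : ∀ p : ℕ, p.Prime → ∀ x : R, (p : R) ∣ x ^ p - x) (b : ℕ → R) :
    ∃ a : ℕ → R, ∀ n ≠ 0, wittGhost a n = additiveGhost b n :=
  ⟨wittOfGhost (additiveGhost b), fun _ hn =>
    (dworkCongruences_additiveGhost b).wittGhost_wittOfGhost fermat hn⟩

end Ghost

lemma extZ_coe_of_pos (a : ℕ → ℤ) {d : ℕ} (hd : 0 < d) : extZ (fun n => a n) d = a d :=
  dif_pos hd

lemma wittGhost_extZ_coe (a : ℕ → ℤ) (n : ℕ) :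
    wittGhost (extZ fun d => a d) n = wittGhost a n :=
  Finset.sum_congr rfl fun _ hd => by rw [extZ_coe_of_pos a (Nat.pos_of_mem_divisors hd)]

/-- For every integer sequence `b : ℕ+ → ℤ` there is an integer sequence `a : ℕ+ → ℤ`
whose Witt ghost coordinates equal the additive ghost coordinates of `b`:
`Σ_{d ∣ n} d·a(d)^(n/d) = Σ_{d ∣ n} d·b(d)` for all positive integers `n`. -/
theorem exists_witt_seq_matching_additive_ghost (b : ℕ+ → ℤ) :
    ∃ a : ℕ+ → ℤ, ∀ n : ℕ+,
      ∑ d ∈ (n : ℕ).divisors, (d : ℤ) * (extZ a d) ^ ((n : ℕ) / d)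
        = ∑ d ∈ (n : ℕ).divisors, (d : ℤ) * extZ b d := by
  obtain ⟨a, ha⟩ := exists_witt_seq_matching_additive_ghost_general
    (fun _ => Int.prime_dvd_pow_self_sub) (extZ b)
  exact ⟨fun n => a n, fun n => (wittGhost_extZ_coe a n).trans (ha n n.ne_zero)⟩
end

section
/- For every sequence a : ℕ+ → ℤ there exists a sequence b : ℕ+ → ℤ such that for every positive integer n, Σ_{d ∣ n} d·b(d) = Σ_{d ∣ n} d·a(d)^{n/d}. (Surjectivity of the change of coordinates from additive ghost coordinates to Witt ghost coordinates over the integers.) -/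
lemma extZ_of_pos (a : ℕ+ → ℤ) {d : ℕ} (hd : 0 < d) : extZ a d = a ⟨d, hd⟩ :=
  dif_pos hd

lemma pow_succ_dvd_of_dvd_of_not_dvd {M : Type*} [CommMonoidWithZero M] [IsCancelMulZero M]
    {p m d : M} (hp : Prime p) {k : ℕ} (hd : d ∣ p ^ (k + 1) * m) (hdm : ¬ d ∣ p ^ k * m) :
    p ^ (k + 1) ∣ d := by
  obtain ⟨e, he⟩ := hd
  have hpe : ¬ p ∣ e := by
    rintro ⟨f, rfl⟩
    refine hdm ⟨f, mul_left_cancel₀ hp.ne_zero ?_⟩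
    rw [← mul_assoc, ← pow_succ', he, mul_left_comm]
  exact hp.pow_dvd_of_dvd_mul_right _ hpe (he ▸ dvd_mul_right _ m)

lemma prime_pow_dvd_of_mem_divisors_sdiff {p k m d : ℕ} (hp : p.Prime)
    (hd : d ∈ (p ^ (k + 1) * m).divisors \ (p ^ k * m).divisors) : p ^ (k + 1) ∣ d := by
  obtain ⟨hd, hdm⟩ := Finset.mem_sdiff.1 hd
  have hm : m ≠ 0 := right_ne_zero_of_mul (Nat.mem_divisors.1 hd).2
  refine pow_succ_dvd_of_dvd_of_not_dvd hp.prime (Nat.dvd_of_mem_divisors hd) fun h => hdm ?_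
  exact Nat.mem_divisors.2 ⟨h, mul_ne_zero (pow_ne_zero k hp.ne_zero) hm⟩

lemma divisors_prime_pow_mul_subset {p m : ℕ} (hp : p.Prime) (hm : 0 < m) (k : ℕ) :
    (p ^ k * m).divisors ⊆ (p ^ (k + 1) * m).divisors :=
  Nat.divisors_subset_of_dvd (mul_ne_zero (pow_ne_zero _ hp.ne_zero) hm.ne')
    (mul_dvd_mul_right (pow_dvd_pow p k.le_succ) m)

/-- A sequence of integers satisfying the Gauss congruences (also called a Dold sequence). Allowing
`p ∣ m` gives the same notion as requiring `m` to be prime to `p`. -/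
def IsGaussSequence (w : ℕ → ℤ) : Prop :=
  ∀ ⦃p : ℕ⦄, p.Prime → ∀ k m : ℕ, 0 < m →
    (p : ℤ) ^ (k + 1) ∣ w (p ^ (k + 1) * m) - w (p ^ k * m)

lemma isGaussSequence_pow (x : ℤ) : IsGaussSequence (x ^ ·) := by
  intro p hp k m _
  have fermat : (p : ℤ) ∣ (x ^ m) ^ p - x ^ m := Int.prime_dvd_pow_self_sub hp (x ^ m)
  have lifted := dvd_sub_pow_of_dvd_sub fermat k
  simp only [← pow_mul] at lifted
  rwa [mul_assoc, ← pow_succ', mul_comm m, mul_comm m] at lifted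

namespace IsGaussSequence

variable {w h : ℕ → ℤ} {p : ℕ}

lemma prime_pow_dvd_mul_sub (hw : IsGaussSequence w) (hp : p.Prime) {k d e : ℕ} (he : 0 < e)
    (hk : p ^ k ∣ d * (p * e)) : (p : ℤ) ^ k ∣ d * (w (p * e) - w e) := by
  obtain ⟨j, m, hpm, rfl⟩ := Nat.exists_eq_pow_mul_and_not_dvd he.ne' p hp.ne_one
  have hm : 0 < m := Nat.pos_of_mul_pos_left he
  have hpe : p * (p ^ j * m) = p ^ (j + 1) * m := by ring
  rw [hpe] at hk ⊢
  have hd : p ^ k ∣ d * p ^ (j + 1) :=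
    hp.prime.pow_dvd_of_dvd_mul_right k hpm (by rwa [mul_assoc])
  calc (p : ℤ) ^ k ∣ d * (p : ℤ) ^ (j + 1) := mod_cast hd
    _ ∣ d * (w (p ^ (j + 1) * m) - w (p ^ j * m)) := mul_dvd_mul_left _ (hw hp j m hm)

lemma sum_divisors_mul {u : ℕ → ℕ → ℤ} (hu : ∀ d, IsGaussSequence (u d)) :
    IsGaussSequence fun n => ∑ d ∈ n.divisors, d * u d (n / d) := by
  intro p hp k m hm
  beta_reduce
  rw [← Finset.sum_sdiff (divisors_prime_pow_mul_subset hp hm k), add_sub_assoc,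
    ← Finset.sum_sub_distrib]
  refine dvd_add (Finset.dvd_sum fun d hd => ?_) (Finset.dvd_sum fun d hd => ?_)
  · exact Dvd.dvd.mul_right (mod_cast prime_pow_dvd_of_mem_divisors_sdiff hp hd) _
  · have hd0 : 0 < d := Nat.pos_of_mem_divisors hd
    obtain ⟨⟨e, he⟩, hne⟩ := Nat.mem_divisors.1 hd
    have he0 : 0 < e := Nat.pos_of_ne_zero (right_ne_zero_of_mul (he ▸ hne))
    have hpe : p ^ (k + 1) * m = d * (p * e) := by rw [pow_succ', mul_assoc, he, mul_left_comm]
    rw [← mul_sub, hpe, he, Nat.mul_div_cancel_left _ hd0, Nat.mul_div_cancel_left _ hd0]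
    exact (hu d).prime_pow_dvd_mul_sub hp he0 (hpe ▸ dvd_mul_right _ m)

lemma prime_pow_dvd_of_sum_divisors_eq (hw : IsGaussSequence w)
    (hh : ∀ n > 0, ∑ d ∈ n.divisors, h d = w n) (hp : p.Prime) (k : ℕ) {m : ℕ} (hm : 0 < m) :
    (p : ℤ) ^ (k + 1) ∣ h (p ^ (k + 1) * m) := by
  induction m using Nat.strong_induction_on with
  | _ m ih =>
  set n := p ^ (k + 1) * m
  have hpk : 0 < p ^ k := pow_pos hp.pos k
  have hn0 : 0 < n := mul_pos (pow_pos hp.pos _) hm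
  have hlt : p ^ k * m < n :=
    Nat.mul_lt_mul_of_pos_right (pow_lt_pow_right₀ hp.one_lt k.lt_succ_self) hm
  have hsum : (p : ℤ) ^ (k + 1) ∣ ∑ d ∈ n.divisors \ (p ^ k * m).divisors, h d := by
    have := hw hp k m hm
    rwa [← hh _ hn0, ← hh _ (mul_pos hpk hm),
      ← Finset.sum_sdiff (divisors_prime_pow_mul_subset hp hm k), add_sub_cancel_right] at this
  have hmem : n ∈ n.divisors \ (p ^ k * m).divisors :=
    Finset.mem_sdiff.2 ⟨Nat.mem_divisors_self n hn0.ne',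
      fun hdvd => hlt.not_ge (Nat.divisor_le hdvd)⟩
  rw [← Finset.add_sum_erase _ _ hmem] at hsum
  refine (dvd_add_left (Finset.dvd_sum fun d hd => ?_)).1 hsum
  obtain ⟨hdn, hd⟩ := Finset.mem_erase.1 hd
  obtain ⟨m', rfl⟩ := prime_pow_dvd_of_mem_divisors_sdiff hp hd
  have hdiv := (Finset.mem_sdiff.1 hd).1
  exact ih m' (lt_of_mul_lt_mul_left' ((Nat.divisor_le hdiv).lt_of_ne hdn))
    (Nat.pos_of_mul_pos_left (Nat.pos_of_mem_divisors hdiv))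

lemma dvd_of_sum_divisors_eq (hw : IsGaussSequence w)
    (hh : ∀ n > 0, ∑ d ∈ n.divisors, h d = w n) {n : ℕ} (hn : 0 < n) : (n : ℤ) ∣ h n := by
  rw [Int.natCast_dvd, Nat.dvd_iff_prime_pow_dvd_dvd]
  rintro p (_ | k) hp hk
  · simp
  · obtain ⟨m, rfl⟩ := hk
    rw [← Int.natCast_dvd]
    exact_mod_cast hw.prime_pow_dvd_of_sum_divisors_eq hh hp k (Nat.pos_of_mul_pos_left hn)

lemma exists_sum_divisors_mul_eq (hw : IsGaussSequence w) :
    ∃ b : ℕ → ℤ, ∀ n > 0, ∑ d ∈ n.divisors, d * b d = w n := by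
  obtain ⟨h, hh⟩ : ∃ h : ℕ → ℤ, ∀ n > 0, ∑ d ∈ n.divisors, h d = w n :=
    ⟨_, ArithmeticFunction.sum_eq_iff_sum_mul_moebius_eq.2 fun _ _ => rfl⟩
  refine ⟨fun n => h n / n, fun n hn => (Finset.sum_congr rfl fun d hd => ?_).trans (hh n hn)⟩
  exact Int.mul_ediv_cancel' (hw.dvd_of_sum_divisors_eq hh (Nat.pos_of_mem_divisors hd))

end IsGaussSequence

/-- For every integer sequence `a : ℕ+ → ℤ` there is an integer sequence `b : ℕ+ → ℤ`
whose additive ghost coordinates equal the Witt ghost coordinates of `a`: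
`Σ_{d ∣ n} d·b(d) = Σ_{d ∣ n} d·a(d)^(n/d)` for all positive integers `n`. -/
theorem exists_additive_seq_matching_witt_ghost (a : ℕ+ → ℤ) :
    ∃ b : ℕ+ → ℤ, ∀ n : ℕ+,
      ∑ d ∈ (n : ℕ).divisors, (d : ℤ) * extZ b d
        = ∑ d ∈ (n : ℕ).divisors, (d : ℤ) * (extZ a d) ^ ((n : ℕ) / d) := by
  have hw : IsGaussSequence fun n => ∑ d ∈ n.divisors, (d : ℤ) * extZ a d ^ (n / d) :=
    .sum_divisors_mul fun d => isGaussSequence_pow (extZ a d)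
  obtain ⟨b, hb⟩ := hw.exists_sum_divisors_mul_eq
  refine ⟨fun n => b n, fun n => (Finset.sum_congr rfl fun d hd => ?_).trans (hb n n.pos)⟩
  rw [extZ_of_pos _ (Nat.pos_of_mem_divisors hd), PNat.mk_coe]
end
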